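/- arXiv:2308.03634 — 3 statements merged into one kernel-verified Lean document; each statement's English description precedes it below -/
import Mathlib

section
/- Let 𝕏 be a σ-finite measure space and ℳ a finitely-generated Banach L^0(𝕏)-module. Then every L^0(𝕏)-linear operator T : ℳ → L^0(𝕏) is automatically continuous, i.e. T ∈ ℳ*: there exists g ∈ L^0(𝕏)⁺ such that |T(v)| ≤ g|v| for all v ∈ ℳ. -/
/-!
Bounding `T` on a dense submodule says nothing about `T` elsewhere, so the proof shows that the
span `N` of finitely many elements is closed, hence equal to `M`, and at the same time that `T` is
bounded on `N`. Both facts are proved by induction on the number of generators, as in the proof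
that finite-dimensional normed spaces are complete.

For the inductive step let `N` be closed and let `w` be a new generator. The pointwise distances
`|w - n|`, `n ∈ N`, are stable under minimum (`exists_glue`), so minimising an integral produces
their essential infimum `d`, truncated at `1`, together with a minimising sequence (`exists_dist`).
Over `{d = 0}` the element `w` is a limit of elements of `N` and so belongs to `N`; over `{d > 0}`
the inequality `|f| d ≤ |n + f w|` bounds the coefficient `f` by the pointwise norm
(`exists_coeff_bound`). After the part of `w` over `{d = 0}` is absorbed into `N`, this
coefficient bound yields both the bound on `T` and, since coefficients of an almost everywhere
convergent sequence converge almost everywhere, the closedness of `N + L⁰ w`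
(`span_insert_step`).
-/

open MeasureTheory Filter Set TensorProduct

noncomputable section

namespace Paper

variable {X : Type*} [MeasurableSpace X]

/-- The space `L⁰(𝕏)` of real-valued measurable functions up to `μ`-a.e. equality. -/
abbrev L0 (μ : Measure X) : Type _ := X →ₘ[μ] ℝ

instance (μ : Measure X) : CommRing (L0 μ) :=
  { (inferInstance : AddCommGroup (L0 μ)), (inferInstance : CommMonoid (L0 μ)) with
    left_distrib := fun a b c => AEEqFun.toGerm_injective <| by
      simp only [AEEqFun.mul_toGerm, AEEqFun.add_toGerm, mul_add]
    right_distrib := fun a b c => AEEqFun.toGerm_injective <| by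
      simp only [AEEqFun.mul_toGerm, AEEqFun.add_toGerm, add_mul]
    zero_mul := fun a => AEEqFun.toGerm_injective <| by
      simp only [AEEqFun.mul_toGerm, AEEqFun.zero_toGerm, zero_mul]
    mul_zero := fun a => AEEqFun.toGerm_injective <| by
      simp only [AEEqFun.mul_toGerm, AEEqFun.zero_toGerm, mul_zero] }

/-- The distance on `L⁰(𝕏)` inducing the topology of convergence in measure, defined through
the auxiliary finite measure `μ.toFinite` (which satisfies `μ ≪ μ.toFinite ≪ μ`). -/
noncomputable def dL0 (μ : Measure X) [SFinite μ] (f g : L0 μ) : ℝ :=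
  ∫ x, min |f x - g x| 1 ∂(μ.toFinite)

/-- A Banach `L⁰(𝕏)`-module: a module over `L⁰(𝕏)` endowed with a pointwise norm, complete
with respect to the induced distance. -/
class BanachMod (μ : Measure X) [SFinite μ] (M : Type*) [AddCommGroup M]
    [Module (L0 μ) M] where
  pn : M → L0 μ
  pn_nonneg : ∀ v : M, 0 ≤ pn v
  pn_eq_zero : ∀ v : M, pn v = 0 ↔ v = 0
  pn_add_le : ∀ v w : M, pn (v + w) ≤ pn v + pn w
  pn_smul : ∀ (f : L0 μ) (v : M), pn (f • v) = |f| * pn v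
  complete : ∀ u : ℕ → M,
    (∀ ε : ℝ, 0 < ε → ∃ N : ℕ, ∀ m ≥ N, ∀ n ≥ N, dL0 μ (pn (u m - u n)) 0 < ε) →
    ∃ v : M, Tendsto (fun n => dL0 μ (pn (u n - v)) 0) atTop (nhds 0)

/-- The pointwise norm of a Banach `L⁰(𝕏)`-module, with the measure explicit. -/
noncomputable def pn (μ : Measure X) [SFinite μ] {M : Type*} [AddCommGroup M]
    [Module (L0 μ) M] [BanachMod μ M] (v : M) : L0 μ :=
  BanachMod.pn v

/-- The distance on a Banach `L⁰(𝕏)`-module. -/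
noncomputable def dM (μ : Measure X) [SFinite μ] {M : Type*} [AddCommGroup M]
    [Module (L0 μ) M] [BanachMod μ M] (v w : M) : ℝ :=
  dL0 μ (pn μ (v - w)) 0

section Defs

variable (μ : Measure X) [SFinite μ]
variable {M N : Type*} [AddCommGroup M] [Module (L0 μ) M] [BanachMod μ M]
  [AddCommGroup N] [Module (L0 μ) N] [BanachMod μ N]

/-- The set of admissible bounds of a map between Banach `L⁰(𝕏)`-modules; the pointwise norm
`|T|` of a homomorphism is the infimum of this set. -/
def homBddSet (T : M → N) : Set (L0 μ) :=
  {g | 0 ≤ g ∧ ∀ v, pn μ (T v) ≤ g * pn μ v}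

/-- A homomorphism of Banach `L⁰(𝕏)`-modules: an `L⁰(𝕏)`-linear map admitting a bound
`g ∈ L⁰(𝕏)⁺` with `|T v| ≤ g |v|` (equivalently, `L⁰(𝕏)`-linear and continuous). -/
def IsHom (T : M →ₗ[L0 μ] N) : Prop :=
  ∃ g, g ∈ homBddSet μ (⇑T)

/-- The set of admissible bounds of an `L⁰(𝕏)`-valued map (for elements of the dual module). -/
def dualBddSet (ω : M → L0 μ) : Set (L0 μ) :=
  {g | 0 ≤ g ∧ ∀ v, |ω v| ≤ g * pn μ v}

/-- Membership in the dual module `ℳ*`: an `L⁰(𝕏)`-linear map `ω : ℳ → L⁰(𝕏)` admitting a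
bound `g ∈ L⁰(𝕏)⁺` with `|ω v| ≤ g |v|`. -/
def IsDual (ω : M →ₗ[L0 μ] L0 μ) : Prop :=
  ∃ g, g ∈ dualBddSet μ (⇑ω)

/-- Membership in the unit disc `𝔻_{ℳ*}` of the dual module: `|ω| ≤ 1`, equivalently
`|ω v| ≤ |v|` for every `v`. -/
def InDualDisc (ω : M →ₗ[L0 μ] L0 μ) : Prop :=
  ∀ v, |ω v| ≤ pn μ v

/-- The family of pointwise norms `|s - ∑_{i ∈ F ∪ G} v i|` for `G` finite disjoint from `F`,
whose `F`-indexed inf-sup being `0` defines `s = ∑_{i∈I} v i`. -/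
def sumUB {I : Type*} (v : I → M) (s : M) (F : Finset I) : Set (L0 μ) :=
  {g | ∃ G : Finset I, Disjoint G F ∧ g = pn μ (s - (∑ i ∈ F, v i + ∑ i ∈ G, v i))}

/-- `HasSumMod μ v s` means that the family `{v_i}` is summable in the Banach `L⁰(𝕏)`-module
with sum `s`, i.e. `⋀_F ⋁_G |s - ∑_{i ∈ F ∪ G} v_i| = 0` (the inner suprema being the values
of `b`, and the outer infimum being `0`). -/
def HasSumMod {I : Type*} (v : I → M) (s : M) : Prop :=
  ∃ b : Finset I → L0 μ, (∀ F, IsLUB (sumUB μ v s F) (b F)) ∧ IsGLB (Set.range b) 0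

/-- A family in a Banach `L⁰(𝕏)`-module is summable if it has a sum. -/
def SummableMod {I : Type*} (v : I → M) : Prop :=
  ∃ s, HasSumMod μ v s

/-- The partial sums `∑_{i ∈ F} |v i|` of the pointwise norms of a family; the element `|v|₁`
of `ℓ₁(I, ℳ)` is the supremum of this set. -/
def l1PartialSums {I : Type*} (v : I → M) : Set (L0 μ) :=
  {g | ∃ F : Finset I, g = ∑ i ∈ F, pn μ (v i)}

/-- Membership in `ℓ₁(I, ℳ)`: the partial sums of the pointwise norms admit a supremum
(equivalently, an upper bound) in `L⁰(𝕏)`. -/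
def Meml1 {I : Type*} (v : I → M) : Prop :=
  ∃ b, IsLUB (l1PartialSums μ v) b

/-- The partial sums `∑_{i ∈ F} |v i|` for an `L⁰(𝕏)`-valued family. -/
def l1PartialSumsF {I : Type*} (v : I → L0 μ) : Set (L0 μ) :=
  {g | ∃ F : Finset I, g = ∑ i ∈ F, |v i|}

/-- Membership in `ℓ₁(I, L⁰(𝕏))`. -/
def Meml1F {I : Type*} (v : I → L0 μ) : Prop :=
  ∃ b, IsLUB (l1PartialSumsF μ v) b

/-- The set whose infimum defines the projective pointwise norm: all values
`∑_{i=1}^n |v_i||w_i|` over representations `α = ∑_{i=1}^n v_i ⊗ w_i`. -/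
def piReps (α : M ⊗[L0 μ] N) : Set (L0 μ) :=
  {g | ∃ (n : ℕ) (v : Fin n → M) (w : Fin n → N),
    α = ∑ i, v i ⊗ₜ[L0 μ] w i ∧ g = ∑ i, pn μ (v i) * pn μ (w i)}

/-- The set whose supremum defines the injective pointwise norm: all values
`|∑_{i=1}^n ω(v_i) η(w_i)|` over representations `α = ∑_{i=1}^n v_i ⊗ w_i` and elements
`ω ∈ 𝔻_{ℳ*}`, `η ∈ 𝔻_{𝒩*}`. -/
def epsReps (α : M ⊗[L0 μ] N) : Set (L0 μ) :=
  {g | ∃ (n : ℕ) (v : Fin n → M) (w : Fin n → N)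
    (ω : M →ₗ[L0 μ] L0 μ) (η : N →ₗ[L0 μ] L0 μ), InDualDisc μ ω ∧ InDualDisc μ η ∧
    α = ∑ i, v i ⊗ₜ[L0 μ] w i ∧ g = |∑ i, ω (v i) * η (w i)|}

/-- `IsPiTensor μ M N P e` states that the Banach `L⁰(𝕏)`-module `P`, together with the
`L⁰(𝕏)`-linear map `e` defined on the algebraic tensor product, realizes the projective
tensor product `ℳ ⊗̂_π 𝒩`: the pointwise norm of `e α` is the projective pointwise norm
`|α|_π` and the image of `e` is dense. -/
structure IsPiTensor (M N P : Type*) [AddCommGroup M] [Module (L0 μ) M] [BanachMod μ M]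
    [AddCommGroup N] [Module (L0 μ) N] [BanachMod μ N]
    [AddCommGroup P] [Module (L0 μ) P] [BanachMod μ P]
    (e : M ⊗[L0 μ] N →ₗ[L0 μ] P) : Prop where
  pn_emb : ∀ α : M ⊗[L0 μ] N, IsGLB (piReps μ α) (pn μ (e α))
  dense : ∀ p : P, ∀ ε : ℝ, 0 < ε → ∃ α : M ⊗[L0 μ] N, dM μ (e α) p < ε

/-- `IsEpsTensor μ M N P e` states that the Banach `L⁰(𝕏)`-module `P`, together with the
`L⁰(𝕏)`-linear map `e` defined on the algebraic tensor product, realizes the injective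
tensor product `ℳ ⊗̂_ε 𝒩`: the pointwise norm of `e α` is the injective pointwise norm
`|α|_ε` and the image of `e` is dense. -/
structure IsEpsTensor (M N P : Type*) [AddCommGroup M] [Module (L0 μ) M] [BanachMod μ M]
    [AddCommGroup N] [Module (L0 μ) N] [BanachMod μ N]
    [AddCommGroup P] [Module (L0 μ) P] [BanachMod μ P]
    (e : M ⊗[L0 μ] N →ₗ[L0 μ] P) : Prop where
  pn_emb : ∀ α : M ⊗[L0 μ] N, IsLUB (epsReps μ α) (pn μ (e α))
  dense : ∀ p : P, ∀ ε : ℝ, 0 < ε → ∃ α : M ⊗[L0 μ] N, dM μ (e α) p < ε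

end Defs

/-- `ℳ` is a finitely-generated Banach `L⁰(𝕏)`-module: there is a finite family of elements
which generates `ℳ`, i.e. such that the `L⁰(𝕏)`-submodule it spans (equivalently, the
collection of simple combinations of elements of its real linear span) is dense in `ℳ`. -/
def FinitelyGenerated (μ : Measure X) [SFinite μ] (M : Type*) [AddCommGroup M]
    [Module (L0 μ) M] [BanachMod μ M] : Prop :=
  ∃ s : Finset M, ∀ v : M, ∀ ε : ℝ, 0 < ε →
    ∃ w ∈ Submodule.span (L0 μ) (s : Set M), dM μ w v < ε

section Helpers

variable {μ : Measure X} [SFinite μ] {M : Type*} [AddCommGroup M] [Module (L0 μ) M]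
  [BanachMod μ M]

/-! ### The pointwise norm almost everywhere -/

lemma pn_nonneg_ae (v : M) : ∀ᵐ x ∂μ, 0 ≤ pn μ v x := by
  filter_upwards [AEEqFun.coeFn_le.2 (BanachMod.pn_nonneg (μ := μ) v),
    AEEqFun.coeFn_zero (μ := μ) (β := ℝ)] with x h h0
  rw [h0] at h
  exact h

lemma pn_add_ae (v w : M) : ∀ᵐ x ∂μ, pn μ (v + w) x ≤ pn μ v x + pn μ w x := by
  filter_upwards [AEEqFun.coeFn_le.2 (BanachMod.pn_add_le (μ := μ) v w),
    AEEqFun.coeFn_add (pn μ v) (pn μ w)] with x h h0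
  exact h.trans_eq h0

lemma pn_smul_ae (f : L0 μ) (v : M) : ∀ᵐ x ∂μ, pn μ (f • v) x = |f x| * pn μ v x := by
  have h : pn μ (f • v) = |f| * pn μ v := BanachMod.pn_smul f v
  rw [h]
  filter_upwards [AEEqFun.coeFn_mul |f| (pn μ v), AEEqFun.coeFn_abs f] with x h1 h2
  rw [h1, Pi.mul_apply, h2]

lemma pn_neg (v : M) : pn μ (-v) = pn μ v := by
  have h : pn μ ((-1 : L0 μ) • v) = |(-1 : L0 μ)| * pn μ v := BanachMod.pn_smul _ v
  rw [neg_one_smul] at h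
  rw [h]
  apply AEEqFun.ext
  filter_upwards [AEEqFun.coeFn_mul |(-1 : L0 μ)| (pn μ v), AEEqFun.coeFn_abs (-1 : L0 μ),
    AEEqFun.coeFn_neg (1 : L0 μ), AEEqFun.coeFn_one (μ := μ) (β := ℝ)] with x h1 h2 h3 h4
  rw [h1, Pi.mul_apply, h2, h3, Pi.neg_apply, h4]
  simp

lemma pn_sub_ae (v w : M) : ∀ᵐ x ∂μ, pn μ (v - w) x ≤ pn μ v x + pn μ w x := by
  have := pn_add_ae (μ := μ) v (-w)
  rwa [pn_neg, ← sub_eq_add_neg] at this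

lemma pn_sub_comm (v w : M) : pn μ (v - w) = pn μ (w - v) := by
  rw [← pn_neg, neg_sub]

/-! ### The pointwise distance to a submodule -/

/-- Submodules closed under convergence `|u j - v| → 0` almost everywhere. Every sequence
converging for the distance of `M` has a subsequence of this kind, so this is closedness for the
distance, in a form that is stable under pointwise reasoning. -/
def AEClosed (N : Submodule (L0 μ) M) : Prop :=
  ∀ (v : M) (u : ℕ → M), (∀ j, u j ∈ N) →
    (∀ᵐ x ∂μ, Tendsto (fun j => pn μ (u j - v) x) atTop (nhds 0)) → v ∈ N

/-- The pointwise distances `|w - n|` to a submodule are stable under minimum: two elements of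
`N` are glued along the set where the first one is the closer to `w`. -/
lemma exists_glue (N : Submodule (L0 μ) M) (w : M) (n n' : N) :
    ∃ m : N, ∀ᵐ x ∂μ, pn μ (w - m) x ≤ min (pn μ (w - n) x) (pn μ (w - n') x) := by
  classical
  set A : Set X := {x | pn μ (w - n) x ≤ pn μ (w - n') x} with hA
  have hAm : MeasurableSet A :=
    measurableSet_le (pn μ (w - (n : M))).measurable (pn μ (w - (n' : M))).measurable
  have hf : Measurable (A.indicator (fun _ => (1 : ℝ))) := measurable_const.indicator hAm
  set a : L0 μ := AEEqFun.mk _ hf.aestronglyMeasurable with ha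
  refine ⟨a • n + (1 - a) • n', ?_⟩
  have key : w - ((a • n + (1 - a) • n' : N) : M)
      = a • (w - (n : M)) + (1 - a) • (w - (n' : M)) := by
    simp only [Submodule.coe_add, Submodule.coe_smul]
    module
  rw [key]
  filter_upwards [pn_add_ae (μ := μ) (a • (w - (n : M))) ((1 - a) • (w - (n' : M))),
    pn_smul_ae a (w - (n : M)), pn_smul_ae (1 - a) (w - (n' : M)),
    AEEqFun.coeFn_mk _ hf.aestronglyMeasurable, AEEqFun.coeFn_sub 1 a,
    AEEqFun.coeFn_one (μ := μ) (β := ℝ)] with x h1 h2 h3 h4 h5 h6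
  rw [← ha] at h4
  rw [h2, h3, h5, Pi.sub_apply, h6, h4] at h1
  refine h1.trans ?_
  by_cases hx : x ∈ A
  · have : pn μ (w - n) x ≤ pn μ (w - n') x := hx
    simp [hx, this]
  · have : ¬ pn μ (w - n) x ≤ pn μ (w - n') x := hx
    simp [hx, (not_le.1 this).le]

/-- Essential infimum of the pointwise distances from `w` to `N`, truncated at `1`, together with
a sequence in `N` converging to `w` over the set where it vanishes. It is found by minimising `∫ min |w - n| 1` over `n ∈ N`. -/
lemma exists_dist (N : Submodule (L0 μ) M) (w : M) :
    ∃ (d : X → ℝ) (u : ℕ → M), Measurable d ∧ (∀ j, u j ∈ N) ∧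
      (∀ᵐ x ∂μ, 0 ≤ d x) ∧ (∀ n ∈ N, ∀ᵐ x ∂μ, d x ≤ pn μ (w - n) x) ∧
      (∀ᵐ x ∂μ, d x = 0 → Tendsto (fun j => pn μ (u j - w) x) atTop (nhds 0)) := by
  classical
  set ν := μ.toFinite with hν
  have hae : ae ν = ae μ := ae_toFinite
  let ψ : N → X → ℝ := fun n x => min (pn μ (w - n) x) 1
  have hψm : ∀ n, Measurable (ψ n) := fun n =>
    (pn μ (w - (n : M))).measurable.min measurable_const
  have hψ0 : ∀ n, ∀ᵐ x ∂μ, 0 ≤ ψ n x := fun n => by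
    filter_upwards [pn_nonneg_ae (μ := μ) (w - (n : M))] with x hx
    exact le_min hx zero_le_one
  have hψb : ∀ n, ∀ᵐ x ∂ν, ‖ψ n x‖ ≤ 1 := fun n => by
    rw [hae]
    filter_upwards [hψ0 n] with x hx
    rw [Real.norm_of_nonneg hx]
    exact min_le_right _ _
  have hψi : ∀ n, Integrable (ψ n) ν := fun n =>
    Integrable.of_bound (hψm n).aestronglyMeasurable 1 (hψb n)
  have hI0 : ∀ n, 0 ≤ ∫ x, ψ n x ∂ν := fun n => by
    apply integral_nonneg_of_ae
    change ∀ᵐ x ∂ν, 0 ≤ ψ n x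
    rw [hae]; exact hψ0 n
  set c : ℝ := ⨅ n, ∫ x, ψ n x ∂ν with hc
  have hbdd : BddBelow (range fun n => ∫ x, ψ n x ∂ν) := ⟨0, by rintro _ ⟨n, rfl⟩; exact hI0 n⟩
  have hcle : ∀ n, c ≤ ∫ x, ψ n x ∂ν := fun n => ciInf_le hbdd n
  have hex : ∀ j : ℕ, ∃ n, ∫ x, ψ n x ∂ν < c + 1 / ((j : ℝ) + 1) := fun j =>
    exists_lt_of_ciInf_lt (lt_add_of_pos_right _ (by positivity))
  choose p hp using hex
  choose glue hglue using exists_glue (μ := μ) N w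
  have hgψ : ∀ n n', ∀ᵐ x ∂μ, ψ (glue n n') x ≤ min (ψ n x) (ψ n' x) := fun n n' => by
    filter_upwards [hglue n n'] with x hx
    have h1 := hx.trans (min_le_left _ _)
    have h2 := hx.trans (min_le_right _ _)
    exact le_min (min_le_min_right _ h1) (min_le_min_right _ h2)
  -- successive gluing makes the minimising sequence pointwise decreasing
  let m : ℕ → N := fun j => Nat.rec (p 0) (fun k q => glue q (p (k + 1))) j
  have hm1 : ∀ j, m (j + 1) = glue (m j) (p (j + 1)) := fun j => rfl
  have hanti : ∀ᵐ x ∂μ, Antitone fun j => ψ (m j) x := by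
    have : ∀ᵐ x ∂μ, ∀ j, ψ (m (j + 1)) x ≤ ψ (m j) x := ae_all_iff.2 fun j => by
      filter_upwards [hgψ (m j) (p (j + 1))] with x hx
      rw [hm1]
      exact hx.trans (min_le_left _ _)
    filter_upwards [this] with x hx
    exact antitone_nat_of_succ_le hx
  have hmp : ∀ j, ∀ᵐ x ∂ν, ψ (m j) x ≤ ψ (p j) x := fun j => by
    rw [hae]
    cases j with
    | zero => exact Eventually.of_forall fun x => le_rfl
    | succ j =>
      filter_upwards [hgψ (m j) (p (j + 1))] with x hx
      rw [hm1]
      exact hx.trans (min_le_right _ _)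
  have hmI : ∀ j : ℕ, ∫ x, ψ (m j) x ∂ν ≤ c + 1 / ((j : ℝ) + 1) := fun j =>
    (integral_mono_ae (hψi _) (hψi _) (hmp j)).trans (hp j).le
  have hm0 : ∀ᵐ x ∂μ, ∀ j, 0 ≤ ψ (m j) x := ae_all_iff.2 fun j => hψ0 _
  let d : X → ℝ := fun x => ⨅ j, ψ (m j) x
  have hdm : Measurable d := Measurable.iInf fun j => hψm _
  have hlim : ∀ᵐ x ∂μ, Tendsto (fun j => ψ (m j) x) atTop (nhds (d x)) := by
    filter_upwards [hanti, hm0] with x h1 h2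
    exact tendsto_atTop_ciInf h1 ⟨0, by rintro _ ⟨j, rfl⟩; exact h2 j⟩
  have hd0 : ∀ᵐ x ∂μ, 0 ≤ d x := by
    filter_upwards [hm0] with x h2
    exact le_ciInf h2
  have hdI : Tendsto (fun j => ∫ x, ψ (m j) x ∂ν) atTop (nhds (∫ x, d x ∂ν)) := by
    apply tendsto_integral_of_dominated_convergence (fun _ => 1)
      (fun j => (hψm _).aestronglyMeasurable) (integrable_const _) (fun j => hψb _)
    rw [hae]; exact hlim
  have hdc : ∫ x, d x ∂ν ≤ c := by
    have h1 : Tendsto (fun j : ℕ => c + 1 / ((j : ℝ) + 1)) atTop (nhds (c + 0)) :=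
      tendsto_const_nhds.add tendsto_one_div_add_atTop_nhds_zero_nat
    rw [add_zero] at h1
    exact le_of_tendsto_of_tendsto' hdI h1 hmI
  have hdb : ∀ᵐ x ∂ν, ‖d x‖ ≤ 1 := by
    rw [hae]
    filter_upwards [hd0, hlim] with x h0 h1
    rw [Real.norm_of_nonneg h0]
    exact le_of_tendsto' h1 fun j => min_le_right _ _
  have hdi : Integrable d ν := Integrable.of_bound hdm.aestronglyMeasurable 1 hdb
  refine ⟨d, fun j => (m j).1, hdm, fun j => (m j).2, hd0, ?_, ?_⟩
  · intro n hn
    have hmini : ∀ n : N, Integrable (fun x => min (d x) (ψ n x)) ν := fun n =>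
      hdi.inf (hψi n)
    -- gluing `n` to the minimising sequence stays within `N`, so the integrals stay above `c`
    have hlow : c ≤ ∫ x, min (d x) (ψ ⟨n, hn⟩ x) ∂ν := by
      have h1 : Tendsto (fun j => ∫ x, min (ψ (m j) x) (ψ ⟨n, hn⟩ x) ∂ν) atTop
          (nhds (∫ x, min (d x) (ψ ⟨n, hn⟩ x) ∂ν)) := by
        apply tendsto_integral_of_dominated_convergence (fun _ => 1)
          (fun j => ((hψm _).min (hψm _)).aestronglyMeasurable) (integrable_const _)
        · intro j
          rw [hae]
          filter_upwards [hψ0 (m j), hψ0 ⟨n, hn⟩] with x h1 h2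
          rw [Real.norm_of_nonneg (le_min h1 h2)]
          exact (min_le_left _ _).trans (min_le_right _ _)
        · rw [hae]
          filter_upwards [hlim] with x hx
          exact hx.min tendsto_const_nhds
      refine ge_of_tendsto' h1 fun j => (hcle (glue (m j) ⟨n, hn⟩)).trans ?_
      refine integral_mono_ae (hψi _) ((hψi _).inf (hψi _)) ?_
      change ∀ᵐ x ∂ν, _
      rw [hae]
      exact hgψ _ _
    have hz : ∫ x, (d x - min (d x) (ψ ⟨n, hn⟩ x)) ∂ν = 0 := by
      apply le_antisymm
      · rw [integral_sub hdi (hmini _)]; linarith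
      · exact integral_nonneg fun x => sub_nonneg.2 (min_le_left _ _)
    rw [integral_eq_zero_iff_of_nonneg (fun x => sub_nonneg.2 (min_le_left _ _))
      (hdi.sub (hmini _))] at hz
    have hz' : ∀ᵐ x ∂ν, d x - min (d x) (ψ ⟨n, hn⟩ x) = 0 := hz
    rw [hae] at hz'
    filter_upwards [hz'] with x hx
    have h1 : d x ≤ ψ ⟨n, hn⟩ x := by
      rw [sub_eq_zero] at hx
      rw [hx]; exact min_le_right _ _
    exact h1.trans (min_le_left _ _)
  · filter_upwards [hlim] with x hx h0
    rw [h0] at hx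
    refine hx.congr' ?_
    filter_upwards [hx.eventually (gt_mem_nhds zero_lt_one)] with j hj
    rw [pn_sub_comm]
    rcases min_lt_iff.1 hj with h | h
    · exact min_eq_left h.le
    · exact absurd h (lt_irrefl _)

/-! ### Adjoining a generator -/

/-- Adjoining `w` to a closed submodule `N`: `w` lies in `N` over the set where `e = 1`, and off
that set the coefficient of `w` is controlled by the pointwise norm. -/
lemma exists_coeff_bound (N : Submodule (L0 μ) M) (hN : AEClosed N) (w : M) :
    ∃ e h : L0 μ, e • w ∈ N ∧ e * e = e ∧
      ∀ n ∈ N, ∀ f : L0 μ, e * f = 0 → ∀ᵐ x ∂μ, |f x| ≤ h x * pn μ (n + f • w) x := by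
  classical
  obtain ⟨d, u, hdm, huN, hd0, hd, hu⟩ := exists_dist (μ := μ) N w
  have hE : MeasurableSet {x | d x = 0} := hdm (measurableSet_singleton 0)
  have hem : Measurable ({x | d x = 0}.indicator fun _ => (1 : ℝ)) :=
    measurable_const.indicator hE
  set e : L0 μ := AEEqFun.mk _ hem.aestronglyMeasurable with he
  have hex : ∀ᵐ x ∂μ, e x = {x | d x = 0}.indicator (fun _ => (1 : ℝ)) x :=
    AEEqFun.coeFn_mk _ _
  set h : L0 μ := AEEqFun.mk _ hdm.inv.aestronglyMeasurable with hh
  have hhx : ∀ᵐ x ∂μ, h x = (d x)⁻¹ := AEEqFun.coeFn_mk _ _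
  refine ⟨e, h, ?_, ?_, ?_⟩
  · refine hN _ (fun j => e • u j) (fun j => N.smul_mem _ (huN j)) ?_
    have h1 : ∀ᵐ x ∂μ, ∀ j, pn μ (e • u j - e • w) x = |e x| * pn μ (u j - w) x :=
      ae_all_iff.2 fun j => by
        rw [← smul_sub]; exact pn_smul_ae _ _
    filter_upwards [h1, hex, hu] with x h1 h2 h3
    simp only [h1, h2]
    by_cases hx : d x = 0
    · simpa [hx] using h3 hx
    · simp [hx]
  · apply AEEqFun.ext
    filter_upwards [AEEqFun.coeFn_mul e e, hex] with x h1 h2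
    rw [h1, Pi.mul_apply, h2]
    by_cases hx : d x = 0 <;> simp [hx]
  · intro n hn f hef
    -- `k = 1 / f`, with value `0` where `f = 0`
    have hkm : Measurable fun x => (f x)⁻¹ := f.measurable.inv
    set k : L0 μ := AEEqFun.mk _ hkm.aestronglyMeasurable with hk
    have hkx : ∀ᵐ x ∂μ, k x = (f x)⁻¹ := AEEqFun.coeFn_mk _ _
    -- `f (w + k n)` agrees with `n + f w` wherever `f ≠ 0`
    have hdec : f • (w - (-(k • n))) = (n + f • w) - (1 - f * k) • n := by module
    have hef' : ∀ᵐ x ∂μ, e x * f x = 0 := by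
      filter_upwards [AEEqFun.coeFn_mul e f, AEEqFun.coeFn_zero (μ := μ) (β := ℝ)] with x h1 h2
      rw [hef, h2] at h1
      exact h1.symm
    have h3 := pn_smul_ae f (w - (-(k • n)))
    rw [hdec] at h3
    filter_upwards [hd _ (N.neg_mem (N.smul_mem k hn)), h3, hef', hex, hhx, hkx, hd0,
      pn_sub_ae (μ := μ) (n + f • w) ((1 - f * k) • n), pn_smul_ae (1 - f * k) n,
      AEEqFun.coeFn_sub 1 (f * k), AEEqFun.coeFn_mul f k,
      AEEqFun.coeFn_one (μ := μ) (β := ℝ), pn_nonneg_ae (μ := μ) (n + f • w)] with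
      x h1 h3 h4 h5 h6 h7 h8 h9 h10 h11 h12 h13 h14
    by_cases hfx : f x = 0
    · rw [hfx, abs_zero, h6]
      exact mul_nonneg (inv_nonneg.2 h8) h14
    · have hdx : d x ≠ 0 := fun hdx => by
        rw [h5] at h4
        simp [hdx, hfx] at h4
      have hpos : 0 < d x := lt_of_le_of_ne h8 (Ne.symm hdx)
      have hz : (1 - f * k : L0 μ) x = 0 := by
        rw [h11, Pi.sub_apply, h13, h12, Pi.mul_apply, h7, Pi.one_apply, mul_inv_cancel₀ hfx,
          sub_self]
      rw [h10, hz, abs_zero, zero_mul, add_zero, h3] at h9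
      rw [h6, inv_mul_eq_div, le_div_iff₀ hpos]
      exact (mul_le_mul_of_nonneg_left h1 (abs_nonneg _)).trans h9

/-- Closedness and boundedness of `T` both pass from `span s` to `span (insert w s)`. -/
lemma span_insert_step (T : M →ₗ[L0 μ] L0 μ) (s : Set M) (w : M)
    (hc : AEClosed (Submodule.span (L0 μ) s))
    (hb : ∃ g : L0 μ, ∀ v ∈ Submodule.span (L0 μ) s, ∀ᵐ x ∂μ, |T v x| ≤ g x * pn μ v x) :
    AEClosed (Submodule.span (L0 μ) (insert w s)) ∧
    ∃ g : L0 μ, ∀ v ∈ Submodule.span (L0 μ) (insert w s),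
      ∀ᵐ x ∂μ, |T v x| ≤ g x * pn μ v x := by
  obtain ⟨e, h, hew, hee, hbd⟩ := exists_coeff_bound _ hc w
  obtain ⟨g, hg⟩ := hb
  set N := Submodule.span (L0 μ) s with hN
  -- since `e w ∈ N`, the coefficient of `w` can be taken to vanish where `e = 1`
  have hdec : ∀ v ∈ Submodule.span (L0 μ) (insert w s),
      ∃ n ∈ N, ∃ f : L0 μ, e * f = 0 ∧ v = n + f • w := by
    intro v hv
    obtain ⟨a, z, hz, rfl⟩ := Submodule.mem_span_insert.1 hv
    refine ⟨z + a • e • w, N.add_mem hz (N.smul_mem _ hew), (1 - e) * a, ?_, by module⟩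
    rw [← mul_assoc, mul_sub, mul_one, hee, sub_self, zero_mul]
  constructor
  · intro v u hu hlim
    choose n hn f hf huf using fun j => hdec (u j) (hu j)
    have hCau : ∀ᵐ x ∂μ, ∃ l, Tendsto (fun j => f j x) atTop (nhds l) := by
      have h1 : ∀ᵐ x ∂μ, ∀ i j, |f i x - f j x| ≤ h x * pn μ (u i - u j) x := by
        refine ae_all_iff.2 fun i => ae_all_iff.2 fun j => ?_
        have h2 := hbd (n i - n j) (N.sub_mem (hn i) (hn j)) (f i - f j)
          (by rw [mul_sub, hf, hf, sub_self])
        have h3 : n i - n j + (f i - f j) • w = u i - u j := by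
          rw [huf i, huf j]; module
        rw [h3] at h2
        filter_upwards [h2, AEEqFun.coeFn_sub (f i) (f j)] with x h4 h5
        rwa [h5] at h4
      have h2 : ∀ᵐ x ∂μ, ∀ i j, pn μ (u i - u j) x ≤ pn μ (u i - v) x + pn μ (u j - v) x := by
        refine ae_all_iff.2 fun i => ae_all_iff.2 fun j => ?_
        have := pn_sub_ae (μ := μ) (u i - v) (u j - v)
        rwa [sub_sub_sub_cancel_right] at this
      have h0 : ∀ᵐ x ∂μ, ∀ i j, 0 ≤ pn μ (u i - u j) x :=
        ae_all_iff.2 fun i => ae_all_iff.2 fun j => pn_nonneg_ae _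
      filter_upwards [h0, h1, h2, hlim] with x h0 h1 h2 h3
      apply cauchySeq_tendsto_of_complete
      have h4 : Tendsto (fun q : ℕ × ℕ => |h x| * (pn μ (u q.1 - v) x + pn μ (u q.2 - v) x))
          (atTop ×ˢ atTop) (nhds (|h x| * (0 + 0))) :=
        ((h3.comp tendsto_fst).add (h3.comp tendsto_snd)).const_mul _
      rw [add_zero, mul_zero, prod_atTop_atTop_eq] at h4
      rw [cauchySeq_iff_tendsto_dist_atTop_0]
      refine squeeze_zero (fun q => dist_nonneg) (fun q => ?_) h4
      rw [Real.dist_eq]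
      calc |f q.1 x - f q.2 x| ≤ h x * pn μ (u q.1 - u q.2) x := h1 _ _
        _ ≤ |h x| * pn μ (u q.1 - u q.2) x :=
            mul_le_mul_of_nonneg_right (le_abs_self _) (h0 _ _)
        _ ≤ _ := mul_le_mul_of_nonneg_left (h2 _ _) (abs_nonneg _)
    obtain ⟨F, hFm, hF⟩ := exists_stronglyMeasurable_limit_of_tendsto_ae
      (fun j => (f j).aestronglyMeasurable) hCau
    set F' : L0 μ := AEEqFun.mk F hFm.aestronglyMeasurable with hF'
    have hF'x : ∀ᵐ x ∂μ, F' x = F x := AEEqFun.coeFn_mk _ _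
    have hmem : v - F' • w ∈ N := by
      refine hc _ n hn ?_
      have h1 : ∀ᵐ x ∂μ, ∀ j, pn μ (n j - (v - F' • w)) x
          ≤ pn μ (u j - v) x + |f j x - F x| * pn μ w x := by
        refine ae_all_iff.2 fun j => ?_
        have h2 : n j - (v - F' • w) = (u j - v) - (f j - F') • w := by
          rw [huf j]; module
        rw [h2]
        filter_upwards [pn_sub_ae (μ := μ) (u j - v) ((f j - F') • w),
          pn_smul_ae (f j - F') w, AEEqFun.coeFn_sub (f j) F', hF'x] with x h3 h4 h5 h6
        rwa [h4, h5, Pi.sub_apply, h6] at h3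
      have h0 : ∀ᵐ x ∂μ, ∀ j, 0 ≤ pn μ (n j - (v - F' • w)) x :=
        ae_all_iff.2 fun j => pn_nonneg_ae _
      filter_upwards [h0, h1, hlim, hF] with x h0 h1 h2 h3
      refine squeeze_zero h0 h1 ?_
      have h4 : Tendsto (fun j => |f j x - F x|) atTop (nhds 0) := by
        have := (h3.sub_const (F x)).abs
        simpa using this
      simpa using h2.add (h4.mul_const (pn μ w x))
    exact Submodule.mem_span_insert.2 ⟨F', _, hmem, by module⟩
  · refine ⟨|g| + |h| * (|g| * pn μ w + |T w|), fun v hv => ?_⟩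
    obtain ⟨n, hn, f, hf, rfl⟩ := hdec v hv
    have hTv : T (n + f • w) = T n + f * T w := by simp
    have hsub : n + f • w - f • w = n := by abel
    have h1 := pn_sub_ae (μ := μ) (n + f • w) (f • w)
    rw [hsub] at h1
    rw [hTv]
    filter_upwards [h1, pn_smul_ae f w, hbd n hn f hf, hg n hn, AEEqFun.coeFn_add (T n) (f * T w),
      AEEqFun.coeFn_mul f (T w), AEEqFun.coeFn_add |g| (|h| * (|g| * pn μ w + |T w|)),
      AEEqFun.coeFn_mul |h| (|g| * pn μ w + |T w|), AEEqFun.coeFn_add (|g| * pn μ w) |T w|,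
      AEEqFun.coeFn_mul |g| (pn μ w), AEEqFun.coeFn_abs g, AEEqFun.coeFn_abs h,
      AEEqFun.coeFn_abs (T w), pn_nonneg_ae (μ := μ) w, pn_nonneg_ae (μ := μ) n,
      pn_nonneg_ae (μ := μ) (n + f • w)] with
      x h1 h2 h3 h4 h5 h6 h7 h8 h9 h10 h11 h12 h13 h14 h15 h16
    rw [h5, Pi.add_apply, h6, Pi.mul_apply, h7, Pi.add_apply, h8, Pi.mul_apply, h9, Pi.add_apply,
      h10, Pi.mul_apply, h11, h12, h13]
    rw [h2] at h1
    have hfle : |f x| ≤ |h x| * pn μ (n + f • w) x :=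
      h3.trans (mul_le_mul_of_nonneg_right (le_abs_self _) h16)
    have hc0 : 0 ≤ |g x| * pn μ w x + |T w x| := by positivity
    calc |T n x + f x * T w x| ≤ |T n x| + |f x| * |T w x| := by
          rw [← abs_mul]; exact abs_add_le _ _
      _ ≤ |g x| * pn μ n x + |f x| * |T w x| := by
          gcongr
          exact h4.trans (mul_le_mul_of_nonneg_right (le_abs_self _) h15)
      _ ≤ |g x| * (pn μ (n + f • w) x + |f x| * pn μ w x) + |f x| * |T w x| := by gcongr
      _ = |g x| * pn μ (n + f • w) x + |f x| * (|g x| * pn μ w x + |T w x|) := by ring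
      _ ≤ |g x| * pn μ (n + f • w) x
          + (|h x| * pn μ (n + f • w) x) * (|g x| * pn μ w x + |T w x|) := by gcongr
      _ = _ := by ring

lemma span_finset (T : M →ₗ[L0 μ] L0 μ) (s : Finset M) :
    AEClosed (Submodule.span (L0 μ) (s : Set M)) ∧
    ∃ g : L0 μ, ∀ v ∈ Submodule.span (L0 μ) (s : Set M),
      ∀ᵐ x ∂μ, |T v x| ≤ g x * pn μ v x := by
  classical
  induction s using Finset.induction_on with
  | empty =>
    simp only [Finset.coe_empty, Submodule.span_empty]
    refine ⟨fun v u hu hlim => ?_, 0, fun v hv => ?_⟩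
    · rw [Submodule.mem_bot]
      refine (BanachMod.pn_eq_zero (μ := μ) v).1 ?_
      apply AEEqFun.ext
      filter_upwards [hlim, AEEqFun.coeFn_zero (μ := μ) (β := ℝ)] with x h1 h2
      have h3 : ∀ j, u j = 0 := fun j => (Submodule.mem_bot _).1 (hu j)
      simp only [h3, zero_sub, pn_neg] at h1
      rw [h2]
      exact tendsto_nhds_unique tendsto_const_nhds h1
    · rw [(Submodule.mem_bot _).1 hv, map_zero]
      filter_upwards [AEEqFun.coeFn_zero (μ := μ) (β := ℝ)] with x h2
      simp [h2]
  | insert w s _ ih =>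
    rw [Finset.coe_insert]
    exact span_insert_step T _ w ih.1 ih.2

/-! ### From the distance to almost everywhere convergence -/

/-- A sequence converging for the distance of `M` has a subsequence converging in pointwise norm
almost everywhere. -/
lemma exists_ae_subseq (v : M) (u : ℕ → M)
    (hu : Tendsto (fun j => dM μ (u j) v) atTop (nhds 0)) :
    ∃ ns : ℕ → ℕ, ∀ᵐ x ∂μ, Tendsto (fun j => pn μ (u (ns j) - v) x) atTop (nhds 0) := by
  set ν := μ.toFinite with hν
  have hae : ae ν = ae μ := ae_toFinite
  let F : ℕ → X → ℝ := fun j x => min |pn μ (u j - v) x - (0 : L0 μ) x| 1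
  have hFm : ∀ j, Measurable (F j) := fun j => by
    have h1 := (pn μ (u j - v)).measurable
    have h2 := (0 : L0 μ).measurable
    exact (continuous_abs.measurable.comp (h1.sub h2)).min measurable_const
  have hF0 : ∀ j x, 0 ≤ F j x := fun j x => le_min (abs_nonneg _) zero_le_one
  have hFi : ∀ j, Integrable (F j) ν := fun j =>
    Integrable.of_bound (hFm j).aestronglyMeasurable 1 (Eventually.of_forall fun x => by
      rw [Real.norm_of_nonneg (hF0 j x)]; exact min_le_right _ _)
  have hT : TendstoInMeasure ν F atTop (fun _ => (0 : ℝ)) := by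
    refine tendstoInMeasure_of_tendsto_eLpNorm one_ne_zero
      (fun j => (hFm j).aestronglyMeasurable) aestronglyMeasurable_const ?_
    have h1 : ∀ j, eLpNorm (F j - fun _ => (0 : ℝ)) 1 ν = ENNReal.ofReal (dM μ (u j) v) := by
      intro j
      have h2 : (F j - fun _ => (0 : ℝ)) = F j := by funext x; simp
      rw [h2, eLpNorm_one_eq_lintegral_enorm, ← ofReal_integral_norm_eq_lintegral_enorm (hFi j)]
      congr 1
      refine integral_congr_ae (Eventually.of_forall fun x => ?_)
      exact Real.norm_of_nonneg (hF0 j x)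
    simp only [h1]
    simpa using ENNReal.tendsto_ofReal hu
  obtain ⟨ns, -, hns⟩ := hT.exists_seq_tendsto_ae
  rw [hae] at hns
  have h0 : ∀ᵐ x ∂μ, ∀ j, 0 ≤ pn μ (u j - v) x := ae_all_iff.2 fun j => pn_nonneg_ae _
  refine ⟨ns, ?_⟩
  filter_upwards [hns, h0, AEEqFun.coeFn_zero (μ := μ) (β := ℝ)] with x h1 h2 h3
  refine h1.congr' ?_
  filter_upwards [h1.eventually (gt_mem_nhds zero_lt_one)] with j hj
  rcases min_lt_iff.1 hj with h | h
  · change min _ _ = _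
    rw [min_eq_left h.le, h3, Pi.zero_apply, sub_zero, abs_of_nonneg (h2 _)]
  · exact absurd h (lt_irrefl _)

end Helpers

/-- Let `𝕏` be a σ-finite measure space and `ℳ` a finitely-generated Banach
`L⁰(𝕏)`-module. Then every `L⁰(𝕏)`-linear operator `T : ℳ → L⁰(𝕏)` is automatically
continuous, i.e. `T ∈ ℳ*`: there exists `g ∈ L⁰(𝕏)⁺` such that `|T v| ≤ g |v|` for all
`v ∈ ℳ`. -/
theorem fin_gen_automatic_continuity
    (μ : Measure X) [SigmaFinite μ]
    (M : Type*) [AddCommGroup M] [Module (L0 μ) M] [BanachMod μ M]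
    (hfg : FinitelyGenerated μ M) (T : M →ₗ[L0 μ] L0 μ) :
    ∃ g : L0 μ, 0 ≤ g ∧ ∀ v : M, |T v| ≤ g * pn μ v := by
  obtain ⟨s, hs⟩ := hfg
  obtain ⟨hc, g, hg⟩ := span_finset T s
  refine ⟨|g|, ?_, fun v => ?_⟩
  · rw [← AEEqFun.coeFn_le]
    filter_upwards [AEEqFun.coeFn_abs g, AEEqFun.coeFn_zero (μ := μ) (β := ℝ)] with x h1 h2
    rw [h1, h2]
    exact abs_nonneg _
  have hv : v ∈ Submodule.span (L0 μ) (s : Set M) := by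
    choose u hu hd using fun j : ℕ => hs v (1 / ((j : ℝ) + 1)) (by positivity)
    obtain ⟨ns, hns⟩ := exists_ae_subseq v u
      (squeeze_zero (fun j => integral_nonneg fun x => le_min (abs_nonneg _) zero_le_one)
        (fun j => (hd j).le) tendsto_one_div_add_atTop_nhds_zero_nat)
    exact hc v (fun j => u (ns j)) (fun j => hu _) hns
  rw [← AEEqFun.coeFn_le]
  filter_upwards [hg v hv, AEEqFun.coeFn_abs (T v), AEEqFun.coeFn_mul |g| (pn μ v),
    AEEqFun.coeFn_abs g, pn_nonneg_ae (μ := μ) v] with x h1 h2 h3 h4 h5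
  rw [h2, h3, Pi.mul_apply, h4]
  exact h1.trans (mul_le_mul_of_nonneg_right (le_abs_self _) h5)

end Paper
end
end

section
/- Let 𝕏 be a σ-finite measure space and I a nonempty index set. The map φ : L^0(𝕏;ℓ₁(I)) → ℓ₁(I,L^0(𝕏)) defined by φ(a) := (a(·)_i)_{i∈I} is an isomorphism of Banach L^0(𝕏)-modules. -/
/-!
The pointwise operations of `L⁰(𝕏;ℓ₁(I))` commute with the coordinate projections almost
everywhere, so the only difficulty is that `I` may be uncountable, while an almost-everywhere
statement can only be intersected over countably many indices. Two countability facts remove it.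

* A strongly measurable map into `ℓ₁(I)` is a pointwise limit of simple functions, and each of the
  finitely many values of a simple function has countable support; so all the values of the map
  vanish outside one countable set of indices (`exists_countable_support`). Hence an upper bound of
  the partial sums `∑_{i ∈ F} |a(·)_i|` dominates, almost everywhere, all partial sums at once, and
  so dominates `‖a(·)‖`.
* If the partial sums `∑_{i ∈ F} |g_i|` are bounded by `b`, then the integrals of
  `|g_i| / (1 + |b|)` against an equivalent finite measure have a finite sum over `I`; so all but
  countably many of the `g_i` vanish (`countable_ne_zero_of_bdd`). The preimage of `g` is then the
  almost everywhere convergent countable series `∑_j g_j e_j` in `ℓ₁(I)`.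

Injectivity follows from additivity and from the equality of the pointwise norms.
-/

open MeasureTheory Filter Set TensorProduct

noncomputable section

namespace Paper

variable {X : Type*} [MeasurableSpace X]

/-- A realization of the `L⁰`-Lebesgue–Bochner space `L⁰(𝕏;𝔹)` as a Banach `L⁰(𝕏)`-module:
the Banach `L⁰(𝕏)`-module `V` is identified, via the bijection `ev`, with the space
`X →ₘ[μ] B` of (classes of) measurable maps with separable range up to a.e. equality,
in such a way that the module operations are the a.e. pointwise ones and the pointwise norm
of `v` is a.e. equal to `x ↦ ‖ev v x‖`. -/
structure IsL0B (μ : Measure X) [SFinite μ] (B : Type*) [NormedAddCommGroup B]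
    [NormedSpace ℝ B] (V : Type*) [AddCommGroup V] [Module (L0 μ) V] [BanachMod μ V]
    (ev : V → (X →ₘ[μ] B)) : Prop where
  bij : Function.Bijective ev
  add : ∀ v w : V, ev (v + w) = ev v + ev w
  smul : ∀ (f : L0 μ) (v : V), ∀ᵐ x ∂μ, (ev (f • v)) x = f x • (ev v) x
  norm : ∀ v : V, ∀ᵐ x ∂μ, (pn μ v) x = ‖(ev v) x‖

/-- The Banach space `ℓ₁(I)`. -/
abbrev l1 (I : Type*) : Type _ := lp (fun _ : I => ℝ) 1

/-! ### Pointwise description of the operations -/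

lemma coeFn_sum_abs {I : Type*} (μ : Measure X) (v : I → L0 μ) (F : Finset I) :
    ∀ᵐ x ∂μ, (∑ i ∈ F, |v i|) x = ∑ i ∈ F, |v i x| := by
  classical
  induction F using Finset.induction_on with
  | empty =>
    filter_upwards [AEEqFun.coeFn_zero (μ := μ) (β := ℝ)] with x hx
    simpa using hx
  | insert i F hi ih =>
    rw [Finset.sum_insert hi]
    filter_upwards [ih, AEEqFun.coeFn_add (|v i|) (∑ i ∈ F, |v i|), AEEqFun.coeFn_abs (v i)]
      with x h1 h2 h3
    rw [Finset.sum_insert hi, ← h1, ← h3]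
    exact h2

lemma sum_abs_le_norm {I : Type*} (y : l1 I) (F : Finset I) : ∑ i ∈ F, |y i| ≤ ‖y‖ := by
  have h := lp.sum_rpow_le_norm_rpow (p := 1) (by simp) y F
  simpa using h

/-- Partial sums over finite subsets of a set containing the support already control the
`ℓ₁`-norm. -/
lemma norm_le_of_support {I : Type*} (y : l1 I) (J : Set I) (hJ : ∀ i, i ∉ J → y i = 0) (c : ℝ)
    (hc : ∀ F : Finset J, ∑ j ∈ F, |y (j : I)| ≤ c) : ‖y‖ ≤ c := by
  classical
  have hc0 : 0 ≤ c := by simpa using hc ∅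
  refine lp.norm_le_of_forall_sum_le (p := 1) (by simp) hc0 fun F => ?_
  have h := hc (F.subtype (· ∈ J))
  rw [Finset.sum_subtype_eq_sum_filter (f := fun i => |y i|)] at h
  rw [Finset.sum_filter_of_ne] at h
  · simpa using h
  · intro i _ hi
    by_contra hiJ
    exact hi (by rw [hJ i hiJ, abs_zero])

/-! ### Countability of the relevant indices -/

lemma countable_support {I : Type*} (y : l1 I) : {i | y i ≠ 0}.Countable := by
  have h : Summable fun i => ‖y i‖ := by
    simpa using (lp.memℓp y).summable (by simp)
  simpa [Function.support] using h.countable_support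

/-- All the values of a strongly measurable `ℓ₁(I)`-valued map are supported in one countable set
of indices. -/
lemma exists_countable_support {I : Type*} (f : X → l1 I) (hf : StronglyMeasurable f) :
    ∃ J : Set I, J.Countable ∧ ∀ x i, i ∉ J → f x i = 0 := by
  refine ⟨⋃ n, ⋃ y ∈ Set.range (hf.approx n), {i | (y : l1 I) i ≠ 0}, ?_, ?_⟩
  · exact countable_iUnion fun n =>
      (hf.approx n).finite_range.countable.biUnion fun y _ => countable_support y
  · intro x i hi
    have hz : ∀ n, (hf.approx n x) i = 0 := by
      intro n
      by_contra h
      exact hi (mem_iUnion.2 ⟨n, mem_biUnion (mem_range_self x) h⟩)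
    have ht : Tendsto (fun n => (hf.approx n x) i) atTop (nhds (f x i)) :=
      ((lp.evalCLM ℝ (fun _ : I => ℝ) 1 i).continuous.tendsto (f x)).comp (hf.tendsto_approx x)
    simp only [hz] at ht
    exact (tendsto_nhds_unique ht tendsto_const_nhds)

/-- A family in `L⁰(𝕏)` with bounded partial sums of absolute values has only countably many
nonzero members. -/
lemma countable_ne_zero_of_bdd {I : Type*} (μ : Measure X) [SFinite μ] (g : I → L0 μ) (b : L0 μ)
    (hb : b ∈ upperBounds (l1PartialSumsF μ g)) : {i | g i ≠ 0}.Countable := by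
  -- The weight `1 / (1 + |b|)` makes the bound integrable against the finite measure `μ.toFinite`.
  let w : I → X → ENNReal := fun i x => ENNReal.ofReal (|g i x| / (1 + |b x|))
  have hac := toFinite_absolutelyContinuous μ
  have hm : ∀ i, AEMeasurable (w i) μ := fun i =>
    (((g i).aestronglyMeasurable.aemeasurable.abs).div
      (b.aestronglyMeasurable.aemeasurable.abs.const_add 1)).ennreal_ofReal
  have hfin : ∀ F : Finset I, ∑ i ∈ F, ∫⁻ x, w i x ∂μ.toFinite ≤ μ.toFinite univ := by
    intro F
    rw [← lintegral_finsetSum' F fun i _ => (hm i).mono_ac hac]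
    calc ∫⁻ x, ∑ i ∈ F, w i x ∂μ.toFinite ≤ ∫⁻ _, 1 ∂μ.toFinite := by
          refine lintegral_mono_ae (hac.ae_le ?_)
          have hF := AEEqFun.coeFn_le.2 (hb ⟨F, rfl⟩)
          filter_upwards [hF, coeFn_sum_abs μ g F] with x h1 h2
          have hpos : 0 < 1 + |b x| := by positivity
          rw [← ENNReal.ofReal_sum_of_nonneg (fun i _ => by positivity), ← Finset.sum_div,
            ENNReal.ofReal_le_one, div_le_one hpos, ← h2]
          exact h1.trans ((le_abs_self _).trans (by linarith))
      _ = μ.toFinite univ := by simp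
  have hsum : ∑' i, ∫⁻ x, w i x ∂μ.toFinite ≠ ⊤ := by
    refine ne_top_of_le_ne_top (measure_ne_top μ.toFinite univ) ?_
    rw [ENNReal.tsum_eq_iSup_sum]
    exact iSup_le hfin
  refine Set.Countable.mono (fun i hi => ?_) (Summable.countable_support_ennreal hsum)
  rw [Function.mem_support]
  intro h0
  refine hi ?_
  have h0' := absolutelyContinuous_toFinite μ |>.ae_le
    ((lintegral_eq_zero_iff' ((hm i).mono_ac hac)).1 h0)
  refine AEEqFun.ext ?_
  filter_upwards [h0', AEEqFun.coeFn_zero (μ := μ) (β := ℝ)] with x h1 h2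
  rw [h2]
  have hpos : 0 < 1 + |b x| := by positivity
  have h3 : |g i x| / (1 + |b x|) ≤ 0 := ENNReal.ofReal_eq_zero.1 h1
  rw [div_le_iff₀ hpos, zero_mul] at h3
  exact abs_nonpos_iff.1 h3

/-! ### The pointwise norm and the preimage of a family -/

/-- The pointwise `ℓ₁`-norm of a class of maps is the supremum in `L⁰(𝕏)` of the partial sums of
its coordinates. -/
lemma isLUB_norm {I : Type*} (μ : Measure X) (f : X →ₘ[μ] l1 I) (g : I → L0 μ) (p : L0 μ)
    (hg : ∀ i, ∀ᵐ x ∂μ, g i x = f x i) (hp : ∀ᵐ x ∂μ, p x = ‖f x‖) :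
    IsLUB (l1PartialSumsF μ g) p := by
  constructor
  · rintro _ ⟨F, rfl⟩
    rw [← AEEqFun.coeFn_le]
    filter_upwards [coeFn_sum_abs μ g F, hp, (ae_ball_iff F.countable_toSet).2 fun i _ => hg i]
      with x h1 h2 h3
    rw [h1, h2, Finset.sum_congr rfl fun i hi => by rw [h3 i hi]]
    exact sum_abs_le_norm (f x) F
  · intro b hb
    obtain ⟨J, hJ, hfJ⟩ := exists_countable_support f f.stronglyMeasurable
    have := hJ.to_subtype
    have hle : ∀ F : Finset J, ∀ᵐ x ∂μ, ∑ j ∈ F, |f x (j : I)| ≤ b x := by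
      intro F
      filter_upwards [AEEqFun.coeFn_le.2 (hb ⟨F.map (Function.Embedding.subtype _), rfl⟩),
        coeFn_sum_abs μ g (F.map (Function.Embedding.subtype _)),
        ae_all_iff.2 fun j : J => hg j] with x h1 h2 h3
      rw [h2, Finset.sum_map] at h1
      simpa [h3] using h1
    rw [← AEEqFun.coeFn_le]
    filter_upwards [hp, ae_all_iff.2 hle] with x h1 h2
    rw [h1]
    exact norm_le_of_support (f x) J (hfJ x) (b x) h2

/-- A family in `L⁰(𝕏)` with bounded partial sums of absolute values consists of the coordinates of
a class of measurable maps into `ℓ₁(I)`. -/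
lemma exists_of_bdd {I : Type*} (μ : Measure X) [SFinite μ] (g : I → L0 μ) (b : L0 μ)
    (hb : b ∈ upperBounds (l1PartialSumsF μ g)) :
    ∃ f : X →ₘ[μ] l1 I, ∀ i, ∀ᵐ x ∂μ, f x i = g i x := by
  classical
  let J : Set I := {i | g i ≠ 0}
  have hJ : Countable J := (countable_ne_zero_of_bdd μ g b hb).to_subtype
  let t : J → X → l1 I := fun j x => g j x • lp.single 1 (j : I) (1 : ℝ)
  have hnorm : ∀ j x, ‖t j x‖ = |g j x| := fun j x => by
    simp [t, norm_smul, lp.norm_single]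
  have hle : ∀ F : Finset J, ∀ᵐ x ∂μ, ∑ j ∈ F, |g j x| ≤ b x := by
    intro F
    filter_upwards [AEEqFun.coeFn_le.2 (hb ⟨F.map (Function.Embedding.subtype _), rfl⟩),
      coeFn_sum_abs μ g (F.map (Function.Embedding.subtype _))] with x h1 h2
    rw [h2, Finset.sum_map] at h1
    exact h1
  have hsum : ∀ᵐ x ∂μ, HasSum (fun j => t j x) (∑' j, t j x) := by
    filter_upwards [ae_all_iff.2 hle] with x hx
    refine Summable.hasSum (Summable.of_norm ?_)
    simp only [hnorm]
    exact summable_of_sum_le (fun _ => abs_nonneg _) hx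
  -- Finite subsets of the countable set `J` form a countably generated filter, so that the
  -- limit of the net of partial sums is still measurable.
  have hmeas : AEStronglyMeasurable (fun x => ∑' j, t j x) μ := by
    refine aestronglyMeasurable_of_tendsto_ae (atTop : Filter (Finset J))
      (f := fun F x => ∑ j ∈ F, t j x) (fun F => ?_) hsum
    exact Finset.aestronglyMeasurable_fun_sum F fun j _ =>
      (g j).aestronglyMeasurable.smul_const _
  refine ⟨AEEqFun.mk _ hmeas, fun i => ?_⟩
  have hi0 : i ∉ J → ∀ᵐ x ∂μ, g i x = 0 := by
    intro hi
    rw [not_not.1 hi]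
    exact AEEqFun.coeFn_zero
  have hi0' : ∀ᵐ x ∂μ, i ∉ J → g i x = 0 := by
    by_cases hi : i ∈ J
    · exact Eventually.of_forall fun x h => absurd hi h
    · filter_upwards [hi0 hi] with x hx _ using hx
  filter_upwards [AEEqFun.coeFn_mk _ hmeas, hsum, hi0'] with x h1 h2 h3
  rw [h1]
  have h4 : HasSum (fun j => t j x i) ((∑' j, t j x : l1 I) i) :=
    h2.mapL (lp.evalCLM ℝ (fun _ : I => ℝ) 1 i)
  have ht : ∀ j, t j x i = g j x * (if i = (j : I) then 1 else 0) := fun j => by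
    simp [t, Pi.single_apply]
  refine h4.unique ?_
  simp only [ht]
  by_cases hi : i ∈ J
  · have := hasSum_ite_eq (⟨i, hi⟩ : J) (g i x)
    convert this using 2 with j
    by_cases hj : j = ⟨i, hi⟩
    · subst hj; simp
    · have : i ≠ j := fun h => hj (Subtype.ext h.symm)
      simp [hj, this]
  · rw [h3 hi]
    convert hasSum_zero using 2 with j
    have : i ≠ j := fun h => hi (h ▸ j.2)
    simp [this]

/-- Let `𝕏` be a σ-finite measure space and `I` a nonempty index set. The
map `φ : L⁰(𝕏;ℓ₁(I)) → ℓ₁(I, L⁰(𝕏))`, `φ(a) := (a(·)_i)_{i ∈ I}`, is an isomorphism of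
Banach `L⁰(𝕏)`-modules: it takes values in `ℓ₁(I, L⁰(𝕏))`, it is additive, `L⁰(𝕏)`-linear,
bijective onto `ℓ₁(I, L⁰(𝕏))`, and it preserves the pointwise norm, i.e.
`|φ a|₁ = ⋁_F ∑_{i ∈ F} |a(·)_i| = |a|`. Here `V` is (a realization of) `L⁰(𝕏;ℓ₁(I))`
and `coord a i` is the coordinate function `a(·)_i ∈ L⁰(𝕏)`. -/
theorem L0_valued_l1_eq_l1_of_L0
    (μ : Measure X) [SigmaFinite μ] {I : Type*} [Nonempty I]
    (V : Type*) [AddCommGroup V] [Module (L0 μ) V] [BanachMod μ V]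
    (ev : V → (X →ₘ[μ] lp (fun _ : I => ℝ) 1))
    (hV : IsL0B μ (lp (fun _ : I => ℝ) 1) V ev)
    (coord : V → I → L0 μ)
    (hcoord : ∀ (a : V) (i : I), ∀ᵐ x ∂μ, (coord a i) x = (ev a) x i) :
    (∀ a : V, Meml1F μ (coord a))
    ∧ (∀ a b : V, coord (a + b) = coord a + coord b)
    ∧ (∀ (f : L0 μ) (a : V), coord (f • a) = fun i => f * coord a i)
    ∧ Function.Injective coord
    ∧ (∀ g : I → L0 μ, Meml1F μ g → ∃ a : V, coord a = g)
    ∧ (∀ a : V, IsLUB (l1PartialSumsF μ (coord a)) (pn μ a)) := by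
  have hlub : ∀ a : V, IsLUB (l1PartialSumsF μ (coord a)) (pn μ a) := fun a =>
    isLUB_norm μ (ev a) (coord a) (pn μ a) (hcoord a) (hV.norm a)
  have hadd : ∀ a b : V, coord (a + b) = coord a + coord b := by
    intro a b
    funext i
    refine AEEqFun.ext ?_
    have h := hcoord (a + b) i
    rw [hV.add] at h
    filter_upwards [h, hcoord a i, hcoord b i, AEEqFun.coeFn_add (ev a) (ev b),
      AEEqFun.coeFn_add (coord a i) (coord b i)] with x h1 h2 h3 h4 h5
    rw [h1, h4]
    refine Eq.trans ?_ h5.symm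
    simp [h2, h3]
  refine ⟨fun a => ⟨_, hlub a⟩, hadd, ?_, ?_, ?_, hlub⟩
  · intro f a
    funext i
    refine AEEqFun.ext ?_
    filter_upwards [hcoord (f • a) i, hcoord a i, hV.smul f a,
      AEEqFun.coeFn_mul f (coord a i)] with x h1 h2 h3 h4
    rw [h1, h3]
    refine Eq.trans ?_ h4.symm
    simp [h2]
  · intro a b hab
    have h0 : coord (a - b) = 0 := by
      have h := hadd (a - b) b
      rw [sub_add_cancel, hab] at h
      exact right_eq_add.1 h
    -- All the partial sums of `coord (a - b)` are zero, so their supremum `|a - b|` is zero.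
    have hle : pn μ (a - b) ≤ 0 := by
      refine (hlub (a - b)).2 ?_
      rintro _ ⟨F, rfl⟩
      have habs : |(0 : L0 μ)| = 0 := by simp [abs]
      simp [h0, habs]
    have hz : pn μ (a - b) = 0 := le_antisymm hle (BanachMod.pn_nonneg _)
    exact sub_eq_zero.1 ((BanachMod.pn_eq_zero (μ := μ) _).1 hz)
  · rintro g ⟨b, hb⟩
    obtain ⟨f, hf⟩ := exists_of_bdd μ g b hb.1
    obtain ⟨a, rfl⟩ := hV.bij.2 f
    refine ⟨a, funext fun i => AEEqFun.ext ?_⟩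
    filter_upwards [hcoord a i, hf i] with x h1 h2
    rw [h1, h2]

end Paper
end
end

section
/- Let 𝕏 be a σ-finite measure space, ℳ, 𝒩 Banach L^0(𝕏)-modules, and α = Σ_{i=1}^n v_i ⊗ w_i ∈ ℳ ⊗ 𝒩. The following are equivalent: (i) α = 0; (ii) Σ_{i=1}^n ω(v_i)·w_i = 0 in 𝒩 for every ω ∈ ℳ*; (iii) Σ_{i=1}^n η(w_i)·v_i = 0 in ℳ for every η ∈ 𝒩*. -/
/-!
The implication from `∑ v i ⊗ w i = 0` to the other two conditions follows by applying `ω ⊗ id`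
or `id ⊗ η`. Conversely, the point is that every `v ∈ ℳ` admits `ω ∈ ℳ*` with `ω v • v = v`
(`exists_dual_smul_self`). Given such an `ω₀` for the first vector `v₀`, the relation
`∑ ω₀ (v i) • w i = 0` expresses `v₀ ⊗ w₀ = v₀ ⊗ (ω₀ v₀ • w₀)` through the other `w i`, so that one
summand can be eliminated while the hypothesis persists; induction on the number of summands
concludes (`tensor_eq_zero`).

The functional comes from a Hahn–Banach theorem with values in `L⁰(𝕏)` (`exists_norming`), rescaled
by `1 / |v|`. Zorn's lemma is applied to submodules `G` of `ℳ × L⁰(𝕏)` with `y ≤ |x|` for all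
`(x, y) ∈ G`; such a `G` is automatically the graph of a functional. A maximal one is defined
everywhere, because Dedekind completeness of `L⁰(𝕏)` (`exists_isLUB`) provides a value at any new
vector, and splitting a scalar `h` according to its sign (`exists_sign_partition`) shows that this
value is admissible.
-/

open MeasureTheory Filter Set TensorProduct

noncomputable section

namespace Paper

variable {X : Type*} [MeasurableSpace X]

/-! ### Order structure of `L⁰(𝕏)` -/

instance instIsOrderedRingL0 (μ : Measure X) : IsOrderedRing (L0 μ) :=
  haveI : IsOrderedAddMonoid (L0 μ) :=
    { add_le_add_left := fun a b hab c => by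
        rw [← AEEqFun.coeFn_le] at hab ⊢
        filter_upwards [hab, AEEqFun.coeFn_add a c, AEEqFun.coeFn_add b c] with x h h1 h2
        rw [h1, h2]
        exact add_le_add_left h _ }
  haveI : ZeroLEOneClass (L0 μ) := ⟨by
    rw [← AEEqFun.coeFn_le]
    filter_upwards [AEEqFun.coeFn_zero (μ := μ) (β := ℝ), AEEqFun.coeFn_one (μ := μ) (β := ℝ)]
      with x h0 h1
    rw [h0, h1]
    exact zero_le_one⟩
  IsOrderedRing.of_mul_nonneg fun a b ha hb => by
    rw [← AEEqFun.coeFn_le] at ha hb ⊢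
    filter_upwards [ha, hb, AEEqFun.coeFn_zero (μ := μ) (β := ℝ), AEEqFun.coeFn_mul a b]
      with x h1 h2 h0 h
    rw [h0] at h1 h2 ⊢
    rw [h]
    exact mul_nonneg h1 h2

/-- Trichotomy in `L⁰(𝕏)`: `a`, `b`, `z` are the indicators of `{h > 0}`, `{h < 0}`, `{h = 0}`,
and `k` is `1 / |h|`, set to `0` where `h` vanishes. -/
lemma exists_sign_partition {μ : Measure X} (h : L0 μ) :
    ∃ a b z k : L0 μ, 0 ≤ a ∧ 0 ≤ b ∧ 0 ≤ z ∧ 0 ≤ k ∧ a + b + z = 1 ∧ z * h = 0 ∧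
      a * h * k = a ∧ -(b * h) * k = b ∧ 0 ≤ a * h ∧ 0 ≤ -(b * h) := by
  have ma : Measurable (fun t : ℝ => if 0 < t then (1 : ℝ) else 0) :=
    Measurable.ite measurableSet_Ioi measurable_const measurable_const
  have mb : Measurable (fun t : ℝ => if t < 0 then (1 : ℝ) else 0) :=
    Measurable.ite measurableSet_Iio measurable_const measurable_const
  have mz : Measurable (fun t : ℝ => if t = 0 then (1 : ℝ) else 0) :=
    Measurable.ite (measurableSet_singleton 0) measurable_const measurable_const
  have mk : Measurable (fun t : ℝ => |t|⁻¹) := by fun_prop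
  obtain ⟨a, ha⟩ : ∃ a : L0 μ, a =ᵐ[μ] fun x => if 0 < h x then (1 : ℝ) else 0 :=
    ⟨_, AEEqFun.coeFn_compMeasurable _ ma h⟩
  obtain ⟨b, hb⟩ : ∃ a : L0 μ, a =ᵐ[μ] fun x => if h x < 0 then (1 : ℝ) else 0 :=
    ⟨_, AEEqFun.coeFn_compMeasurable _ mb h⟩
  obtain ⟨z, hz⟩ : ∃ a : L0 μ, a =ᵐ[μ] fun x => if h x = 0 then (1 : ℝ) else 0 :=
    ⟨_, AEEqFun.coeFn_compMeasurable _ mz h⟩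
  obtain ⟨k, hk⟩ : ∃ a : L0 μ, a =ᵐ[μ] fun x => |h x|⁻¹ :=
    ⟨_, AEEqFun.coeFn_compMeasurable _ mk h⟩
  have h0 := AEEqFun.coeFn_zero (μ := μ) (β := ℝ)
  have h1 := AEEqFun.coeFn_one (μ := μ) (β := ℝ)
  refine ⟨a, b, z, k, ?_, ?_, ?_, ?_, ?_, ?_, ?_, ?_, ?_, ?_⟩
  · rw [← AEEqFun.coeFn_le]
    filter_upwards [ha, h0] with x hx hx0
    rw [hx, hx0]; dsimp; split_ifs <;> norm_num
  · rw [← AEEqFun.coeFn_le]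
    filter_upwards [hb, h0] with x hx hx0
    rw [hx, hx0]; dsimp; split_ifs <;> norm_num
  · rw [← AEEqFun.coeFn_le]
    filter_upwards [hz, h0] with x hx hx0
    rw [hx, hx0]; dsimp; split_ifs <;> norm_num
  · rw [← AEEqFun.coeFn_le]
    filter_upwards [hk, h0] with x hx hx0
    rw [hx, hx0]; dsimp; positivity
  · apply AEEqFun.ext
    filter_upwards [ha, hb, hz, h1, AEEqFun.coeFn_add (a + b) z, AEEqFun.coeFn_add a b]
      with x hxa hxb hxz hx1 e1 e2
    simp only [e1, e2, hx1, Pi.add_apply, hxa, hxb, hxz, Pi.one_apply]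
    rcases lt_trichotomy (h x) 0 with hh | hh | hh
    · simp [hh, hh.not_gt, hh.ne]
    · simp [hh]
    · simp [hh, hh.not_gt, hh.ne']
  · apply AEEqFun.ext
    filter_upwards [hz, h0, AEEqFun.coeFn_mul z h] with x hxz hx0 e1
    simp only [e1, Pi.mul_apply, hxz, hx0, Pi.zero_apply]
    split_ifs with hh <;> simp [hh]
  · apply AEEqFun.ext
    filter_upwards [ha, hk, AEEqFun.coeFn_mul (a * h) k, AEEqFun.coeFn_mul a h]
      with x hxa hxk e1 e2
    simp only [e1, e2, Pi.mul_apply, hxa, hxk]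
    split_ifs with hh
    · rw [abs_of_pos hh]; field_simp
    · simp
  · apply AEEqFun.ext
    filter_upwards [hb, hk, AEEqFun.coeFn_mul (-(b * h)) k, AEEqFun.coeFn_neg (b * h),
      AEEqFun.coeFn_mul b h] with x hxa hxk e1 e2 e3
    simp only [e1, e2, e3, Pi.mul_apply, Pi.neg_apply, hxa, hxk]
    split_ifs with hh
    · rw [abs_of_neg hh]; field_simp [hh.ne]
    · simp
  · rw [← AEEqFun.coeFn_le]
    filter_upwards [ha, h0, AEEqFun.coeFn_mul a h] with x hxa hx0 e1
    simp only [e1, Pi.mul_apply, hxa, hx0, Pi.zero_apply]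
    split_ifs with hh
    · simpa using hh.le
    · simp
  · rw [← AEEqFun.coeFn_le]
    filter_upwards [hb, h0, AEEqFun.coeFn_neg (b * h), AEEqFun.coeFn_mul b h]
      with x hxb hx0 e1 e2
    simp only [e1, e2, Pi.mul_apply, Pi.neg_apply, hxb, hx0, Pi.zero_apply]
    split_ifs with hh
    · simpa using hh.le
    · simp

/-- Dedekind completeness for sup-closed sets. A sequence `f n` in `S` maximizing
`f ↦ ∫ arctan f` has a pointwise supremum that dominates all of `S`, because
`∫ (arctan f - arctan (f n))⁺ = ∫ arctan (f ⊔ f n) - ∫ arctan (f n) → 0` for every `f ∈ S`. -/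
lemma exists_isLUB_of_supClosed {μ : Measure X} [SFinite μ] (S : Set (L0 μ)) (hne : S.Nonempty)
    (hb : BddAbove S) (hS : SupClosed S) : ∃ c, IsLUB S c := by
  obtain ⟨u, hu⟩ := hb
  set ν := μ.toFinite with hν
  have hae : ae ν = ae μ := ae_toFinite
  have harctan : ∀ F : X → ℝ, Measurable F → Integrable (fun x => Real.arctan (F x)) ν := by
    intro F hF
    refine Integrable.of_bound (Real.measurable_arctan.comp hF).aestronglyMeasurable (Real.pi / 2)
      (Eventually.of_forall fun x => ?_)
    rw [Real.norm_eq_abs, abs_le]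
    exact ⟨(Real.neg_pi_div_two_lt_arctan _).le, (Real.arctan_lt_pi_div_two _).le⟩
  let J : L0 μ → ℝ := fun f => ∫ x, Real.arctan (f x) ∂ν
  have hJb : BddAbove (Set.image J S) := by
    refine ⟨J u, ?_⟩
    rintro _ ⟨f, hf, rfl⟩
    refine integral_mono_ae (harctan _ f.measurable) (harctan _ u.measurable) ?_
    have := AEEqFun.coeFn_le.2 (hu hf)
    rw [EventuallyLE, ← hae] at this
    filter_upwards [this] with x hx using Real.arctan_strictMono.monotone hx
  have hex : ∀ n : ℕ, ∃ f ∈ S, sSup (Set.image J S) - 1 / ((n : ℝ) + 1) < J f := by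
    intro n
    obtain ⟨_, ⟨f, hf, rfl⟩, hlt⟩ := exists_lt_of_lt_csSup (hne.image J)
      (show sSup (Set.image J S) - 1 / ((n : ℝ) + 1) < sSup (Set.image J S) from
        sub_lt_self _ Nat.one_div_pos_of_nat)
    exact ⟨f, hf, hlt⟩
  choose f hfS hfJ using hex
  have hgm : Measurable (fun x => ⨆ n, f n x) := Measurable.iSup fun n => (f n).measurable
  let g : L0 μ := AEEqFun.mk (fun x => ⨆ n, f n x) hgm.aestronglyMeasurable
  have hg : g =ᵐ[μ] fun x => ⨆ n, f n x := AEEqFun.coeFn_mk _ _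
  have hle : ∀ b ∈ upperBounds S, ∀ᵐ x ∂μ, ∀ n, f n x ≤ b x := fun b hb =>
    ae_all_iff.2 fun n => AEEqFun.coeFn_le.2 (hb (hfS n))
  refine ⟨g, fun t ht => ?_, fun b hb => ?_⟩
  · have hfg : ∀ n, ∀ᵐ x ∂μ, f n x ≤ g x := fun n => by
      filter_upwards [hle u hu, hg] with x hx hxg
      rw [hxg]
      exact le_ciSup (f := fun n => f n x) ⟨u x, by rintro _ ⟨m, rfl⟩; exact hx m⟩ n
    let D : X → ℝ := fun x => max (Real.arctan (t x) - Real.arctan (g x)) 0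
    have hDi : Integrable D ν := ((harctan _ t.measurable).sub (harctan _ g.measurable)).pos_part
    have hD0 : ∀ x, 0 ≤ D x := fun x => le_max_right _ _
    have hDn : ∀ n : ℕ, ∫ x, D x ∂ν ≤ 1 / ((n : ℝ) + 1) := by
      intro n
      have h1 : ∫ x, D x ∂ν ≤ ∫ x, (Real.arctan ((t ⊔ f n : L0 μ) x) - Real.arctan (f n x)) ∂ν := by
        refine integral_mono_ae hDi ((harctan _ (t ⊔ f n).measurable).sub (harctan _ (f n).measurable)) ?_
        have e := AEEqFun.coeFn_sup t (f n)
        have e' := hfg n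
        rw [EventuallyEq, ← hae] at e
        rw [← hae] at e'
        filter_upwards [e, e'] with x hx hx'
        simp only [D, hx]
        refine max_le ?_ ?_
        · exact sub_le_sub (Real.arctan_strictMono.monotone le_sup_left)
            (Real.arctan_strictMono.monotone hx')
        · exact sub_nonneg.2 (Real.arctan_strictMono.monotone le_sup_right)
      rw [integral_sub (harctan _ (t ⊔ f n).measurable) (harctan _ (f n).measurable)] at h1
      have h2 : J (t ⊔ f n) ≤ sSup (Set.image J S) := le_csSup hJb ⟨_, hS ht (hfS n), rfl⟩
      have h3 := hfJ n
      simp only [J] at h2 h3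
      linarith
    have hD : ∫ x, D x ∂ν = 0 := le_antisymm
      (ge_of_tendsto' tendsto_one_div_add_atTop_nhds_zero_nat hDn) (integral_nonneg hD0)
    rw [integral_eq_zero_iff_of_nonneg hD0 hDi, EventuallyEq, hae] at hD
    rw [← AEEqFun.coeFn_le]
    filter_upwards [hD] with x hx
    have : Real.arctan (t x) - Real.arctan (g x) ≤ 0 := (le_max_left _ _).trans hx.le
    exact Real.arctan_strictMono.le_iff_le.1 (sub_nonpos.1 this)
  · rw [← AEEqFun.coeFn_le]
    filter_upwards [hle b hb, hg] with x hx hxg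
    rw [hxg]
    exact ciSup_le hx

lemma exists_isLUB {μ : Measure X} [SFinite μ] (S : Set (L0 μ)) (hne : S.Nonempty)
    (hb : BddAbove S) : ∃ c, IsLUB S c := by
  obtain ⟨c, hc⟩ := exists_isLUB_of_supClosed (supClosure S) (hne.mono subset_supClosure)
    (by rwa [BddAbove, upperBounds_supClosure]) supClosed_supClosure
  exact ⟨c, isLUB_supClosure.1 hc⟩

/-! ### Hahn–Banach theorem -/

section HahnBanach

variable {μ : Measure X} [SFinite μ] {M : Type*} [AddCommGroup M] [Module (L0 μ) M]
  [BanachMod μ M]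

lemma pn_smul_of_nonneg {f : L0 μ} (hf : 0 ≤ f) (v : M) : pn μ (f • v) = f * pn μ v := by
  have h := BanachMod.pn_smul f v
  rwa [abs_of_nonneg hf] at h

/-- A submodule of `ℳ × L⁰(𝕏)` all of whose points `(x, y)` satisfy `y ≤ |x|`; equivalently, the
graph of a partially defined `L⁰(𝕏)`-linear functional dominated by the pointwise norm. -/
def IsDominated (G : Submodule (L0 μ) (M × L0 μ)) : Prop := ∀ q ∈ G, q.2 ≤ pn μ q.1

/-- One-step extension: `(m, c)` may be adjoined to a dominated graph as soon as `c` satisfies the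
two inequalities required by the multipliers `±1`; the sign partition of a general multiplier
reduces to this case. -/
lemma IsDominated.sup_span {G : Submodule (L0 μ) (M × L0 μ)} (hG : IsDominated G) (m : M)
    (c : L0 μ) (hlow : ∀ q ∈ G, q.2 - pn μ (q.1 - m) ≤ c)
    (hup : ∀ q ∈ G, c ≤ pn μ (q.1 + m) - q.2) :
    IsDominated (G ⊔ Submodule.span (L0 μ) {(m, c)}) := by
  intro r hr
  obtain ⟨⟨x, y⟩, hq, _, hs, rfl⟩ := Submodule.mem_sup.1 hr
  obtain ⟨h, rfl⟩ := Submodule.mem_span_singleton.1 hs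
  obtain ⟨a, b, z, k, ha, hb, hz, hk, hsum, hzh, hak, hbk, hah, hbh⟩ := exists_sign_partition h
  simp only [Prod.smul_mk, Prod.mk_add_mk, smul_eq_mul]
  have hkq := G.smul_mem k hq
  have Ia : a * (y + h * c) ≤ a * pn μ (x + h • m) := by
    have h1 := mul_le_mul_of_nonneg_left (hup _ hkq) hah
    simp only [Prod.smul_mk, smul_eq_mul] at h1
    rw [mul_sub, ← pn_smul_of_nonneg hah, ← mul_assoc, hak, smul_add, smul_smul, hak, mul_smul,
      ← smul_add, pn_smul_of_nonneg ha, le_sub_iff_add_le] at h1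
    calc a * (y + h * c) = a * h * c + a * y := by ring
      _ ≤ _ := h1
  have Ib : b * (y + h * c) ≤ b * pn μ (x + h • m) := by
    have h1 := mul_le_mul_of_nonneg_left (hlow _ hkq) hbh
    simp only [Prod.smul_mk, smul_eq_mul] at h1
    rw [mul_sub, ← pn_smul_of_nonneg hbh, ← mul_assoc, hbk, smul_sub, smul_smul, hbk, neg_smul,
      sub_neg_eq_add, mul_smul, ← smul_add, pn_smul_of_nonneg hb, sub_le_iff_le_add] at h1
    calc b * (y + h * c) = b * y + b * h * c := by ring
      _ ≤ (-(b * h) * c + b * pn μ (x + h • m)) + b * h * c := add_le_add_left h1 _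
      _ = _ := by ring
  have Iz : z * (y + h * c) ≤ z * pn μ (x + h • m) := by
    rw [← pn_smul_of_nonneg hz, smul_add, smul_smul, hzh, zero_smul, add_zero,
      pn_smul_of_nonneg hz, mul_add, ← mul_assoc, hzh, zero_mul, add_zero]
    exact mul_le_mul_of_nonneg_left (hG _ hq) hz
  calc y + h * c = a * (y + h * c) + b * (y + h * c) + z * (y + h * c) := by
        rw [← add_mul, ← add_mul, hsum, one_mul]
    _ ≤ a * pn μ (x + h • m) + b * pn μ (x + h • m) + z * pn μ (x + h • m) :=
        add_le_add (add_le_add Ia Ib) Iz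
    _ = pn μ (x + h • m) := by rw [← add_mul, ← add_mul, hsum, one_mul]

/-- By Dedekind completeness, an admissible value `c` at any `m` exists: the supremum of all
lower constraints. -/
lemma IsDominated.exists_value {G : Submodule (L0 μ) (M × L0 μ)} (hG : IsDominated G) (m : M) :
    ∃ c, IsDominated (G ⊔ Submodule.span (L0 μ) {(m, c)}) := by
  let S : Set (L0 μ) := Set.image (fun q : M × L0 μ => q.2 - pn μ (q.1 - m)) G
  have key : ∀ q ∈ G, pn μ (q.1 + m) - q.2 ∈ upperBounds S := by
    rintro q hq _ ⟨r, hr, rfl⟩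
    dsimp only
    rw [sub_le_iff_le_add, sub_add_eq_add_sub, le_sub_iff_add_le]
    calc r.2 + q.2 ≤ pn μ (r.1 + q.1) := hG _ (G.add_mem hr hq)
      _ = pn μ ((q.1 + m) + (r.1 - m)) := by congr 1; abel
      _ ≤ _ := BanachMod.pn_add_le _ _
  obtain ⟨c, hc⟩ := exists_isLUB S ⟨_, 0, G.zero_mem, rfl⟩ ⟨_, key 0 G.zero_mem⟩
  exact ⟨c, hG.sup_span m c (fun q hq => hc.1 ⟨q, hq, rfl⟩) fun q hq => hc.2 (key q hq)⟩

/-- Hahn–Banach: every `v` has a norming functional `ω` with `ω v = |v|` and `|ω| ≤ 1`. -/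
lemma exists_norming (v : M) : ∃ ω : M →ₗ[L0 μ] L0 μ, InDualDisc μ ω ∧ ω v = pn μ v := by
  have hv : IsDominated (Submodule.span (L0 μ) {((v, pn μ v) : M × L0 μ)}) := by
    intro q hq
    obtain ⟨h, rfl⟩ := Submodule.mem_span_singleton.1 hq
    have h1 : pn μ (h • v) = |h| * pn μ v := BanachMod.pn_smul h v
    simp only [Prod.smul_mk, smul_eq_mul, h1]
    exact mul_le_mul_of_nonneg_right (le_abs_self h) (BanachMod.pn_nonneg v)
  obtain ⟨G, hvG, hmax⟩ := zorn_le_nonempty₀ {G : Submodule (L0 μ) (M × L0 μ) | IsDominated G}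
    (fun C hC hchain G₀ hG₀ => ⟨sSup C, fun q hq => by
      obtain ⟨G, hG, hqG⟩ := (Submodule.mem_sSup_of_directed ⟨G₀, hG₀⟩ hchain.directedOn).1 hq
      exact hC hG q hqG, fun G hG => le_sSup hG⟩) _ hv
  have hG : IsDominated G := hmax.1
  have htot : ∀ m, ∃ c, (m, c) ∈ G := fun m => by
    obtain ⟨c, hc⟩ := hG.exists_value m
    exact ⟨c, hmax.2 hc le_sup_left
      (Submodule.mem_sup_right (Submodule.mem_span_singleton_self _))⟩
  have hzero : pn μ (0 : M) = 0 := (BanachMod.pn_eq_zero 0).2 rfl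
  have huniq : ∀ m c d, (m, c) ∈ G → (m, d) ∈ G → c = d := by
    have hle : ∀ m c d, (m, c) ∈ G → (m, d) ∈ G → c ≤ d := fun m c d hc hd => by
      have h1 := hG _ (G.sub_mem hc hd)
      simp only [Prod.mk_sub_mk, sub_self, hzero] at h1
      exact sub_nonpos.1 h1
    exact fun m c d hc hd => le_antisymm (hle m c d hc hd) (hle m d c hd hc)
  choose ω hω using htot
  refine ⟨{
    toFun := ω
    map_add' := fun x y => huniq _ _ _ (hω _) (G.add_mem (hω x) (hω y))
    map_smul' := fun h x => huniq _ _ _ (hω _) (G.smul_mem h (hω x)) }, fun x => ?_, ?_⟩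
  · refine abs_le'.2 ⟨hG _ (hω x), ?_⟩
    have h1 := hG _ (G.neg_mem (hω x))
    rw [Prod.neg_mk, pn_neg] at h1
    exact h1
  · exact huniq _ _ _ (hω v) (hvG (Submodule.mem_span_singleton_self _))

/-- Rescaling a norming functional by `1 / |v|` makes `ω v` the indicator of `{|v| > 0}`, which
acts as the identity on `v`. -/
lemma exists_dual_smul_self (v : M) : ∃ ω : M →ₗ[L0 μ] L0 μ, IsDual μ ω ∧ ω v • v = v := by
  obtain ⟨ω, hω, hωv⟩ := exists_norming (μ := μ) v
  obtain ⟨a, b, z, k, ha, hb, hz, hk, hsum, hzh, hak, hbk, hah, hbh⟩ :=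
    exists_sign_partition (pn μ v)
  refine ⟨k • ω, ⟨k, hk, fun x => ?_⟩, ?_⟩
  · rw [LinearMap.smul_apply, smul_eq_mul]
    refine abs_le'.2 ⟨mul_le_mul_of_nonneg_left ((le_abs_self _).trans (hω x)) hk, ?_⟩
    rw [← mul_neg]
    exact mul_le_mul_of_nonneg_left ((neg_le_abs _).trans (hω x)) hk
  · have hb0 : b * pn μ v = 0 :=
      le_antisymm (neg_nonneg.1 hbh) (mul_nonneg hb (BanachMod.pn_nonneg v))
    have hkv : k * pn μ v * pn μ v = pn μ v := by
      calc k * pn μ v * pn μ v = (a + b + z) * (k * pn μ v * pn μ v) := by rw [hsum, one_mul]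
        _ = (a * pn μ v * k) * pn μ v + (b * pn μ v) * k * pn μ v
            + (z * pn μ v) * k * pn μ v := by ring
        _ = a * pn μ v + b * pn μ v + z * pn μ v := by
            rw [hak, hb0, hzh]; ring
        _ = pn μ v := by rw [← add_mul, ← add_mul, hsum, one_mul]
    rw [LinearMap.smul_apply, smul_eq_mul, hωv]
    rw [← sub_eq_zero, ← BanachMod.pn_eq_zero (μ := μ)]
    have h1 : (k * pn μ v) • v - v = (k * pn μ v - 1) • v := by rw [sub_smul, one_smul]
    rw [h1, BanachMod.pn_smul]
    -- `|k|v| - 1|` times `|v|` vanishes because `(k|v| - 1)|v|` does and `|v| ≥ 0`.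
    have h2 : |k * pn μ v - 1| * pn μ v = |(k * pn μ v - 1) * pn μ v| := by
      apply AEEqFun.ext
      filter_upwards [AEEqFun.coeFn_mul |k * pn μ v - 1| (pn μ v),
        AEEqFun.coeFn_abs (k * pn μ v - 1), AEEqFun.coeFn_abs ((k * pn μ v - 1) * pn μ v),
        AEEqFun.coeFn_mul (k * pn μ v - 1) (pn μ v),
        AEEqFun.coeFn_le.2 (BanachMod.pn_nonneg (μ := μ) v),
        AEEqFun.coeFn_zero (μ := μ) (β := ℝ)] with x e1 e2 e3 e4 e5 e6
      rw [e6] at e5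
      rw [e1, e3, e4, Pi.mul_apply, Pi.mul_apply, e2, abs_mul, abs_of_nonneg (a := pn μ v x) e5]
    change |k * pn μ v - 1| * pn μ v = 0
    rw [h2, sub_mul, hkv, one_mul, sub_self, abs_zero]

end HahnBanach

/-! ### Null tensors -/

/-- The nontrivial implication, by elimination of the first summand: with `ω₀ v₀ • v₀ = v₀`, the
hypothesis at `ω₀` rewrites the tensor as `∑_{i ≥ 1} (v i - ω₀ (v i) v₀) ⊗ w i`, and the shorter
family inherits the hypothesis. -/
lemma tensor_eq_zero {μ : Measure X} [SFinite μ]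
    {M : Type*} [AddCommGroup M] [Module (L0 μ) M] [BanachMod μ M]
    {N : Type*} [AddCommGroup N] [Module (L0 μ) N] (n : ℕ) (v : Fin n → M) (w : Fin n → N)
    (H : ∀ ω : M →ₗ[L0 μ] L0 μ, IsDual μ ω → (∑ i, ω (v i) • w i) = 0) :
    (∑ i, v i ⊗ₜ[L0 μ] w i) = 0 := by
  induction n with
  | zero => simp
  | succ n ih =>
    obtain ⟨ω₀, hω₀, hv⟩ := exists_dual_smul_self (μ := μ) (v 0)
    have H₀ := H ω₀ hω₀
    rw [Fin.sum_univ_succ] at H₀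
    have h0 : v 0 ⊗ₜ[L0 μ] w 0 = -∑ i : Fin n, (ω₀ (v i.succ) • v 0) ⊗ₜ[L0 μ] w i.succ := by
      conv_lhs => rw [← hv]
      rw [TensorProduct.smul_tmul, eq_neg_of_add_eq_zero_left H₀, TensorProduct.tmul_neg,
        TensorProduct.tmul_sum]
      simp only [TensorProduct.smul_tmul]
    have hred := ih (fun i => v i.succ - ω₀ (v i.succ) • v 0) (fun i => w i.succ) fun ω hω => by
      have h1 := H ω hω
      rw [Fin.sum_univ_succ, ← hv, map_smul, smul_eq_mul, mul_comm, mul_smul,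
        eq_neg_of_add_eq_zero_left H₀] at h1
      simp only [map_sub, map_smul, smul_eq_mul, sub_smul, Finset.sum_sub_distrib]
      rw [← h1, smul_neg, Finset.smul_sum, neg_add_eq_sub]
      congr 1
      refine Finset.sum_congr rfl fun i _ => ?_
      rw [smul_smul, mul_comm]
    rw [Fin.sum_univ_succ, h0, ← hred]
    simp only [TensorProduct.sub_tmul, Finset.sum_sub_distrib]
    abel

lemma sum_smul_eq_zero {R M N : Type*} [CommRing R] [AddCommGroup M] [Module R M]
    [AddCommGroup N] [Module R N] {n : ℕ} {v : Fin n → M} {w : Fin n → N}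
    (h : (∑ i, v i ⊗ₜ[R] w i) = 0) (ω : M →ₗ[R] R) : (∑ i, ω (v i) • w i) = 0 := by
  simpa using congrArg ((TensorProduct.lid R N).toLinearMap ∘ₗ ω.rTensor N) h

lemma sum_tmul_comm_eq_zero {R M N : Type*} [CommRing R] [AddCommGroup M] [Module R M]
    [AddCommGroup N] [Module R N] {n : ℕ} {v : Fin n → M} {w : Fin n → N}
    (h : (∑ i, v i ⊗ₜ[R] w i) = 0) : (∑ i, w i ⊗ₜ[R] v i) = 0 := by
  simpa using congrArg (TensorProduct.comm R M N) h

/-- Let `𝕏` be a σ-finite measure space, `ℳ`, `𝒩` Banach `L⁰(𝕏)`-modules,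
and `α = ∑_{i=1}^n v_i ⊗ w_i ∈ ℳ ⊗ 𝒩`. The following are equivalent: (i) `α = 0`;
(ii) `∑_{i=1}^n ω(v_i) · w_i = 0` in `𝒩` for every `ω ∈ ℳ*`; (iii) `∑_{i=1}^n η(w_i) · v_i = 0`
in `ℳ` for every `η ∈ 𝒩*`. -/
theorem null_tensor_consequences
    (μ : Measure X) [SigmaFinite μ]
    (M : Type*) [AddCommGroup M] [Module (L0 μ) M] [BanachMod μ M]
    (N : Type*) [AddCommGroup N] [Module (L0 μ) N] [BanachMod μ N]
    (n : ℕ) (v : Fin n → M) (w : Fin n → N) :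
    ((∑ i, v i ⊗ₜ[L0 μ] w i) = 0 ↔
      ∀ ω : M →ₗ[L0 μ] L0 μ, IsDual μ ω → (∑ i, ω (v i) • w i) = 0)
    ∧ ((∑ i, v i ⊗ₜ[L0 μ] w i) = 0 ↔
      ∀ η : N →ₗ[L0 μ] L0 μ, IsDual μ η → (∑ i, η (w i) • v i) = 0) := by
  refine ⟨⟨fun h ω _ => sum_smul_eq_zero h ω, tensor_eq_zero n v w⟩,
    ⟨fun h η _ => sum_smul_eq_zero (sum_tmul_comm_eq_zero h) η, fun H => ?_⟩⟩
  exact sum_tmul_comm_eq_zero (tensor_eq_zero n w v H)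

end Paper
end
end
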